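/- arXiv:math/0501261 — 2 statements merged into one kernel-verified Lean document; each statement's English description precedes it below -/
import Mathlib

section
/- Let r > 0, σ > 0, μ ≤ 0 and s > 0, and assume r > μ²/(2σ²). For each integer n ≥ 1 set p_n := (2π)^{-1/2} ∫_{-∞}^{-(μ/σ)·√(ns)} e^{-x²/2} dx. Then the series Σ_{n=1}^∞ e^{-rns}·p_n/n converges, and (1 − e^{-s(r − μ²/(2σ²))})^{1/√2} ≤ exp(− Σ_{n=1}^∞ e^{-rns}·p_n/n) ≤ (1 − e^{-s(r + μ²/(2σ²))})^{1/2}. -/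
open scoped Real

theorem aux_int : MeasureTheory.Integrable (fun x : ℝ => Real.exp (-x ^ 2 / 2)) := by
  have h := integrable_exp_neg_mul_sq (b := 1 / 2) (by norm_num)
  refine h.congr (Filter.Eventually.of_forall fun x => ?_)
  simp only
  congr 1
  ring

theorem aux_half : ∫ x in Set.Iic (0 : ℝ), Real.exp (-x ^ 2 / 2) = Real.sqrt (2 * π) / 2 := by
  have h := integral_gaussian_Ioi (1 / 2)
  have h2 := integral_comp_neg_Iic (0 : ℝ) (fun x : ℝ => Real.exp (-(1 / 2) * x ^ 2))
  rw [neg_zero, h] at h2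
  have e : (fun x : ℝ => Real.exp (-x ^ 2 / 2)) =
      fun x : ℝ => Real.exp (-(1 / 2) * (-x) ^ 2) := by
    funext x
    congr 1
    ring
  rw [e, h2]
  congr 2
  field_simp

theorem aux_split (c : ℝ) : ∫ x in Set.Iic c, Real.exp (-x ^ 2 / 2) =
    Real.sqrt (2 * π) / 2 + ∫ x in (0 : ℝ)..c, Real.exp (-x ^ 2 / 2) := by
  have h := intervalIntegral.integral_Iic_sub_Iic (μ := MeasureTheory.volume)
    (f := fun x : ℝ => Real.exp (-x ^ 2 / 2)) (a := 0) (b := c)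
    aux_int.integrableOn aux_int.integrableOn
  rw [aux_half] at h
  linarith

theorem aux_bounds (c : ℝ) (hc : 0 ≤ c) :
    1 / 2 ≤ (2 * π) ^ (-(1 : ℝ) / 2) * (∫ x in Set.Iic c, Real.exp (-x ^ 2 / 2)) ∧
    (2 * π) ^ (-(1 : ℝ) / 2) * (∫ x in Set.Iic c, Real.exp (-x ^ 2 / 2)) ≤ 1 / 2 + c / 2 := by
  have hpi := Real.pi_gt_three
  have hk : (2 * π) ^ (-(1 : ℝ) / 2) = (Real.sqrt (2 * π))⁻¹ := by
    rw [Real.sqrt_eq_rpow, ← Real.rpow_neg (by positivity)]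
    norm_num
  have hq : 2 ≤ Real.sqrt (2 * π) := Real.le_sqrt_of_sq_le (by linarith)
  have h0 : 0 ≤ ∫ x in (0 : ℝ)..c, Real.exp (-x ^ 2 / 2) :=
    intervalIntegral.integral_nonneg hc fun x _ => (Real.exp_pos _).le
  have h1 : ∫ x in (0 : ℝ)..c, Real.exp (-x ^ 2 / 2) ≤ c := by
    have := intervalIntegral.integral_mono_on (μ := MeasureTheory.volume) hc
      (f := fun x : ℝ => Real.exp (-x ^ 2 / 2)) (g := fun _ => (1 : ℝ))
      aux_int.intervalIntegrable (by simp)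
      (fun x _ => Real.exp_le_one_iff.2 (by nlinarith [sq_nonneg x]))
    simpa using this
  rw [hk, aux_split]
  set q := Real.sqrt (2 * π)
  set J := ∫ x in (0 : ℝ)..c, Real.exp (-x ^ 2 / 2)
  have hqp : 0 < q := by linarith
  have e : q⁻¹ * (q / 2 + J) = 1 / 2 + J / q := by field_simp
  rw [e]
  constructor
  · have : 0 ≤ J / q := by positivity
    linarith
  · have : J / q ≤ c / 2 := by
      gcongr
    linarith

theorem aux_upper (c : ℝ) : 1 / 2 + c / 2 ≤ 1 / Real.sqrt 2 * Real.exp (c ^ 2 / 2) := by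
  have h1 : (0.7 : ℝ) ≤ 1 / Real.sqrt 2 := by
    rw [le_div_iff₀ (by positivity)]
    have : Real.sqrt 2 ≤ 1.42 := Real.sqrt_le_iff.2 (by norm_num)
    linarith
  have h2 := Real.add_one_le_exp (c ^ 2 / 2)
  calc 1 / 2 + c / 2 ≤ 0.7 * (c ^ 2 / 2 + 1) := by nlinarith [sq_nonneg (c - 5 / 7)]
    _ ≤ _ := by gcongr

theorem aux_sum (t : ℝ) (ht : 0 < t) :
    HasSum (fun n : ℕ => Real.exp (-t * (n + 1)) / (n + 1)) (-Real.log (1 - Real.exp (-t))) := by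
  have h := Real.hasSum_pow_div_log_of_abs_lt_one (x := Real.exp (-t))
    (by rw [abs_of_pos (Real.exp_pos _)]; exact (Real.exp_lt_exp.2 (by linarith : -t < 0)).trans_eq Real.exp_zero)
  refine h.congr_fun ?_
  intro n
  rw [← Real.exp_nat_mul]
  push_cast
  congr 2
  ring

/-- One-dimensional Black–Scholes continuity correction, case `μ ≤ 0` with
`r > μ²/(2σ²)`: with `p_n = (2π)^{-1/2} ∫_{-∞}^{-(μ/σ)√(ns)} e^{-x²/2} dx`, the
series `Σ_{n≥1} e^{-rns} p_n / n` converges and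
`(1 − e^{-s(r−μ²/(2σ²))})^{1/√2} ≤ exp(−Σ) ≤ (1 − e^{-s(r+μ²/(2σ²))})^{1/2}`. -/
theorem stmt_3 (r σ μ s : ℝ) (hr : 0 < r) (hσ : 0 < σ) (hμ : μ ≤ 0) (hs : 0 < s)
    (hrμ : μ ^ 2 / (2 * σ ^ 2) < r) :
    let p : ℕ → ℝ := fun n =>
      (2 * π) ^ (-(1 : ℝ) / 2) *
        ∫ x in Set.Iic (-(μ / σ) * Real.sqrt (n * s)), Real.exp (-x ^ 2 / 2)
    Summable (fun n : ℕ => Real.exp (-r * (n + 1) * s) * p (n + 1) / (n + 1)) ∧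
    (1 - Real.exp (-s * (r - μ ^ 2 / (2 * σ ^ 2)))) ^ (1 / Real.sqrt 2) ≤
      Real.exp (-(∑' n : ℕ, Real.exp (-r * (n + 1) * s) * p (n + 1) / (n + 1))) ∧
    Real.exp (-(∑' n : ℕ, Real.exp (-r * (n + 1) * s) * p (n + 1) / (n + 1))) ≤
      (1 - Real.exp (-s * (r + μ ^ 2 / (2 * σ ^ 2)))) ^ ((1 : ℝ) / 2) := by
  intro p
  set m := μ ^ 2 / (2 * σ ^ 2) with hm
  have hm0 : 0 ≤ m := by positivity
  have hcs : ∀ n : ℕ, 0 ≤ -(μ / σ) * Real.sqrt (((n + 1 : ℕ) : ℝ) * s) := fun n => by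
    have : μ / σ ≤ 0 := div_nonpos_of_nonpos_of_nonneg hμ hσ.le
    exact mul_nonneg (by linarith) (Real.sqrt_nonneg _)
  have hcsq : ∀ n : ℕ, (-(μ / σ) * Real.sqrt (((n + 1 : ℕ) : ℝ) * s)) ^ 2 / 2 =
      m * (n + 1) * s := fun n => by
    rw [mul_pow, Real.sq_sqrt (by positivity), hm]
    push_cast
    field_simp
  have hlo : ∀ n : ℕ, 1 / 2 ≤ p (n + 1) := fun n => (aux_bounds _ (hcs n)).1
  have hup : ∀ n : ℕ, p (n + 1) ≤ 1 / Real.sqrt 2 * Real.exp (m * (n + 1) * s) := fun n => by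
    rw [← hcsq n]
    exact (aux_bounds _ (hcs n)).2.trans (aux_upper _)
  have hA : 0 < s * (r - m) := mul_pos hs (by linarith)
  have hB : 0 < s * (r + m) := by positivity
  have SA := (aux_sum _ hA).mul_left (1 / Real.sqrt 2)
  have SB := (aux_sum _ hB).mul_left (1 / 2)
  have leA : ∀ n : ℕ, Real.exp (-r * (n + 1) * s) * p (n + 1) / (n + 1) ≤
      1 / Real.sqrt 2 * (Real.exp (-(s * (r - m)) * (n + 1)) / (n + 1)) := fun n => by
    have e : Real.exp (-(s * (r - m)) * (n + 1)) =
        Real.exp (-r * (n + 1) * s) * Real.exp (m * (n + 1) * s) := by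
      rw [← Real.exp_add]
      congr 1
      ring
    rw [e, ← mul_div_assoc]
    refine div_le_div_of_nonneg_right ?_ (by positivity)
    calc _ ≤ Real.exp (-r * (n + 1) * s) * (1 / Real.sqrt 2 * Real.exp (m * (n + 1) * s)) := by
          gcongr
          exact hup n
      _ = _ := by ring
  have leB : ∀ n : ℕ, 1 / 2 * (Real.exp (-(s * (r + m)) * (n + 1)) / (n + 1)) ≤
      Real.exp (-r * (n + 1) * s) * p (n + 1) / (n + 1) := fun n => by
    have e : Real.exp (-(s * (r + m)) * (n + 1)) ≤ Real.exp (-r * (n + 1) * s) := by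
      apply Real.exp_le_exp.2
      have : 0 ≤ m * (n + 1) * s := by positivity
      nlinarith
    rw [← mul_div_assoc, mul_comm (1 / 2 : ℝ)]
    gcongr
    exact hlo n
  have hS : Summable (fun n : ℕ => Real.exp (-r * (n + 1) * s) * p (n + 1) / (n + 1)) :=
    Summable.of_nonneg_of_le (fun n => le_trans (by positivity) (leB n)) leA SA.summable
  have pos : ∀ t : ℝ, 0 < t → 0 < 1 - Real.exp (-t) := fun t ht => by
    have : Real.exp (-t) < 1 := (Real.exp_lt_exp.2 (by linarith : -t < 0)).trans_eq Real.exp_zero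
    linarith
  refine ⟨hS, ?_, ?_⟩
  · have := hasSum_le leA hS.hasSum SA
    rw [neg_mul, Real.rpow_def_of_pos (pos _ hA)]
    apply Real.exp_le_exp.2
    linarith
  · have := hasSum_le leB SB hS.hasSum
    rw [neg_mul, Real.rpow_def_of_pos (pos _ hB)]
    apply Real.exp_le_exp.2
    linarith
end

section
/- Assume in addition that H is closed under addition (H + H ⊆ H), that the complement of H is closed under addition, and 0 ∉ H. Then for every q ∈ (0,1), 1 − Σ_{n=0}^∞ qⁿ·R_n(ℝ^d) = exp(− Σ_{n=1}^∞ (qⁿ/n)·μ^{∗n}(H)), where μ^{∗n} denotes the n-fold convolution power of μ (μ^{∗1} = μ, μ^{∗(n+1)} = μ^{∗n} ∗ μ). Both series converge absolutely, and the left-hand side is strictly positive. -/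
open MeasureTheory

/-- Convolution of two Borel measures on `ℝ^d` (pushforward of the product
measure under addition). -/
noncomputable def convAdd {d : ℕ} (μ ν : Measure (EuclideanSpace ℝ (Fin d))) :
    Measure (EuclideanSpace ℝ (Fin d)) :=
  (μ.prod ν).map (fun p => p.1 + p.2)

/-- `Qseq μ H n` is the law at time `n` of the random walk with step law `μ`,
restricted to paths staying outside `H` at times `1, …, n`. -/
noncomputable def Qseq {d : ℕ} (μ : Measure (EuclideanSpace ℝ (Fin d)))
    (H : Set (EuclideanSpace ℝ (Fin d))) : ℕ → Measure (EuclideanSpace ℝ (Fin d))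
  | 0 => Measure.dirac 0
  | n + 1 => (convAdd (Qseq μ H n) μ).restrict Hᶜ

/-- `Rseq μ H n` is the law at time `n` of the random walk with step law `μ`,
restricted to paths that avoid `H` at times `1, …, n−1` and land in `H` at time `n`. -/
noncomputable def Rseq {d : ℕ} (μ : Measure (EuclideanSpace ℝ (Fin d)))
    (H : Set (EuclideanSpace ℝ (Fin d))) : ℕ → Measure (EuclideanSpace ℝ (Fin d))
  | 0 => 0
  | n + 1 => (convAdd (Qseq μ H n) μ).restrict H

/-- `convPowAux μ n = μ^{∗(n+1)}`, the `(n+1)`-fold convolution power of `μ`. -/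
noncomputable def convPowAux {d : ℕ} (μ : Measure (EuclideanSpace ℝ (Fin d))) :
    ℕ → Measure (EuclideanSpace ℝ (Fin d))
  | 0 => μ
  | n + 1 => convAdd (convPowAux μ n) μ

section Helpers

open Finset

variable {d : ℕ}

lemma convAdd_eq (μ ν : Measure (EuclideanSpace ℝ (Fin d))) : convAdd μ ν = Measure.conv μ ν := rfl

instance convAdd_finite (μ ν : Measure (EuclideanSpace ℝ (Fin d))) [IsFiniteMeasure μ] [IsFiniteMeasure ν] :
    IsFiniteMeasure (convAdd μ ν) := by
  rw [convAdd_eq]; infer_instance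

instance convAdd_prob (μ ν : Measure (EuclideanSpace ℝ (Fin d))) [IsProbabilityMeasure μ] [IsProbabilityMeasure ν] :
    IsProbabilityMeasure (convAdd μ ν) := by
  rw [convAdd_eq]; infer_instance

instance Qseq_finite (μ : Measure (EuclideanSpace ℝ (Fin d))) [IsFiniteMeasure μ] (H : Set (EuclideanSpace ℝ (Fin d))) (n : ℕ) :
    IsFiniteMeasure (Qseq μ H n) := by
  induction n with
  | zero => rw [Qseq]; infer_instance
  | succ n ih => rw [Qseq]; infer_instance

instance Rseq_finite (μ : Measure (EuclideanSpace ℝ (Fin d))) [IsFiniteMeasure μ] (H : Set (EuclideanSpace ℝ (Fin d))) (n : ℕ) :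
    IsFiniteMeasure (Rseq μ H n) := by
  cases n with
  | zero => rw [Rseq]; infer_instance
  | succ n => rw [Rseq]; infer_instance

instance convPowAux_prob (μ : Measure (EuclideanSpace ℝ (Fin d))) [IsProbabilityMeasure μ] (n : ℕ) :
    IsProbabilityMeasure (convPowAux μ n) := by
  induction n with
  | zero => rw [convPowAux]; infer_instance
  | succ n ih => rw [convPowAux]; infer_instance

lemma convAdd_univ (μ ν : Measure (EuclideanSpace ℝ (Fin d))) [IsFiniteMeasure μ] [IsFiniteMeasure ν] :
    convAdd μ ν Set.univ = μ Set.univ * ν Set.univ := by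
  rw [convAdd, Measure.map_apply (by fun_prop) MeasurableSet.univ, Set.preimage_univ,
    ← Set.univ_prod_univ, Measure.prod_prod]

lemma add_convAdd (μ ν ρ : Measure (EuclideanSpace ℝ (Fin d))) [IsFiniteMeasure μ] [IsFiniteMeasure ν]
    [IsFiniteMeasure ρ] : convAdd (μ + ν) ρ = convAdd μ ρ + convAdd ν ρ :=
  Measure.add_conv μ ν ρ

lemma convAdd_add (μ ν ρ : Measure (EuclideanSpace ℝ (Fin d))) [IsFiniteMeasure μ] [IsFiniteMeasure ν]
    [IsFiniteMeasure ρ] : convAdd μ (ν + ρ) = convAdd μ ν + convAdd μ ρ :=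
  Measure.conv_add μ ν ρ

lemma convAdd_assoc (μ ν ρ : Measure (EuclideanSpace ℝ (Fin d))) [IsFiniteMeasure μ] [IsFiniteMeasure ν]
    [IsFiniteMeasure ρ] : convAdd (convAdd μ ν) ρ = convAdd μ (convAdd ν ρ) :=
  Measure.conv_assoc μ ν ρ

lemma convAdd_comm (μ ν : Measure (EuclideanSpace ℝ (Fin d))) [IsFiniteMeasure μ] [IsFiniteMeasure ν] :
    convAdd μ ν = convAdd ν μ :=
  Measure.conv_comm μ ν

lemma sum_finite {ι : Type*} (s : Finset ι) (f : ι → Measure (EuclideanSpace ℝ (Fin d)))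
    (hf : ∀ i, IsFiniteMeasure (f i)) : IsFiniteMeasure (∑ i ∈ s, f i) := by
  classical
  induction s using Finset.induction_on with
  | empty => rw [Finset.sum_empty]; infer_instance
  | insert a s ha ih =>
    rw [Finset.sum_insert ha]
    have := hf a
    infer_instance

lemma sum_convAdd {ι : Type*} (s : Finset ι) (f : ι → Measure (EuclideanSpace ℝ (Fin d)))
    (hf : ∀ i, IsFiniteMeasure (f i)) (ρ : Measure (EuclideanSpace ℝ (Fin d))) [IsFiniteMeasure ρ] :
    convAdd (∑ i ∈ s, f i) ρ = ∑ i ∈ s, convAdd (f i) ρ := by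
  classical
  induction s using Finset.induction_on with
  | empty => simp [convAdd]
  | insert a s ha ih =>
    have := hf a
    have := sum_finite s f hf
    rw [Finset.sum_insert ha, Finset.sum_insert ha, add_convAdd, ih]

lemma nsmul_convAdd (n : ℕ) (μ ρ : Measure (EuclideanSpace ℝ (Fin d))) [IsFiniteMeasure μ] [IsFiniteMeasure ρ] :
    convAdd (n • μ) ρ = n • convAdd μ ρ := by
  have := sum_convAdd (range n) (fun _ => μ) (fun _ => inferInstance) ρ
  simpa using this

lemma restrict_sum' {ι : Type*} (s : Finset ι) (f : ι → Measure (EuclideanSpace ℝ (Fin d))) (S : Set (EuclideanSpace ℝ (Fin d))) :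
    (∑ i ∈ s, f i).restrict S = ∑ i ∈ s, (f i).restrict S := by
  classical
  induction s using Finset.induction_on with
  | empty => simp
  | insert a s ha ih =>
    rw [Finset.sum_insert ha, Finset.sum_insert ha, Measure.restrict_add, ih]

lemma restrict_nsmul' (n : ℕ) (μ : Measure (EuclideanSpace ℝ (Fin d))) (S : Set (EuclideanSpace ℝ (Fin d))) :
    (n • μ).restrict S = n • μ.restrict S := by
  simpa using restrict_sum' (range n) (fun _ => μ) S

lemma convAdd_supp {S : Set (EuclideanSpace ℝ (Fin d))} (hS : MeasurableSet S)
    (hadd : ∀ a ∈ S, ∀ b ∈ S, a + b ∈ S) (μ ν : Measure (EuclideanSpace ℝ (Fin d)))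
    [IsFiniteMeasure μ] [IsFiniteMeasure ν] (hμ : μ Sᶜ = 0) (hν : ν Sᶜ = 0) :
    convAdd μ ν Sᶜ = 0 := by
  rw [convAdd, Measure.map_apply (by fun_prop) hS.compl]
  have hsub : (fun p : (EuclideanSpace ℝ (Fin d)) × (EuclideanSpace ℝ (Fin d)) => p.1 + p.2) ⁻¹' Sᶜ ⊆ Sᶜ ×ˢ Set.univ ∪ Set.univ ×ˢ Sᶜ := by
    rintro ⟨a, b⟩ h
    by_contra hc
    simp only [Set.mem_union, Set.mem_prod, Set.mem_compl_iff, Set.mem_univ, and_true,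
      true_and, not_or, not_not] at hc
    exact h (hadd a hc.1 b hc.2)
  refine measure_mono_null hsub (measure_union_null ?_ ?_)
  · rw [Measure.prod_prod, hμ, zero_mul]
  · rw [Measure.prod_prod, hν, mul_zero]

lemma restrict_self_of_supp {S : Set (EuclideanSpace ℝ (Fin d))} (μ : Measure (EuclideanSpace ℝ (Fin d))) (h : μ Sᶜ = 0) :
    μ.restrict S = μ :=
  Measure.restrict_eq_self_of_ae_mem h

variable (μ : Measure (EuclideanSpace ℝ (Fin d))) [IsProbabilityMeasure μ]
  (H : Set (EuclideanSpace ℝ (Fin d)))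

lemma step (hH : MeasurableSet H) (n : ℕ) :
    convAdd (Qseq μ H n) μ = Qseq μ H (n + 1) + Rseq μ H (n + 1) := by
  rw [Qseq, Rseq, add_comm, Measure.restrict_add_restrict_compl hH]

lemma dirac_convAdd (ν : Measure (EuclideanSpace ℝ (Fin d))) [IsFiniteMeasure ν] : convAdd (Measure.dirac 0) ν = ν :=
  Measure.dirac_zero_conv ν

lemma firstEntry (hH : MeasurableSet H) (n : ℕ) :
    convPowAux μ n = convAdd (Qseq μ H n) μ +
      ∑ p ∈ antidiagonal n, convAdd (Rseq μ H p.1) (convPowAux μ p.2) := by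
  induction n with
  | zero =>
    simp [Qseq, Rseq, convPowAux, dirac_convAdd]
    simp [convAdd]
  | succ n ih =>
    have hs := sum_finite (antidiagonal n)
      (fun p : ℕ × ℕ => convAdd (Rseq μ H p.1) (convPowAux μ p.2)) (fun _ => inferInstance)
    rw [convPowAux, ih, add_convAdd, sum_convAdd _ _ (fun _ => inferInstance),
      Nat.sum_antidiagonal_succ', step μ H hH n, add_convAdd, add_assoc]
    simp only [convAdd_assoc, convPowAux]

lemma keyStep (hH : MeasurableSet H) (n : ℕ)
    (hJ : ∀ m, n = m + 1 → (m + 1) • Qseq μ H (m + 1) =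
      ∑ p ∈ antidiagonal m, convAdd (Qseq μ H p.1) ((convPowAux μ p.2).restrict Hᶜ)) :
    (n + 1) • convAdd (Qseq μ H n) μ +
      ∑ p ∈ antidiagonal n, convAdd (Rseq μ H p.1) ((convPowAux μ p.2).restrict H) =
    ∑ p ∈ antidiagonal n, convAdd (Qseq μ H p.1) ((convPowAux μ p.2).restrict Hᶜ) +
      (convPowAux μ n).restrict H := by
  have hz : ∀ ν : Measure (EuclideanSpace ℝ (Fin d)), convAdd 0 ν = 0 := fun ν => by simp [convAdd]
  cases n with
  | zero =>
    simp [Qseq, Rseq, convPowAux, dirac_convAdd, hz, add_comm,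
      Measure.restrict_add_restrict_compl hH]
  | succ m =>
    have h1 : (m + 1) • convAdd (Qseq μ H (m + 1)) μ =
        ∑ p ∈ antidiagonal m, convAdd (Qseq μ H (p.1 + 1)) ((convPowAux μ p.2).restrict Hᶜ) +
        ∑ p ∈ antidiagonal m, convAdd (Rseq μ H (p.1 + 1)) ((convPowAux μ p.2).restrict Hᶜ) := by
      rw [← nsmul_convAdd, hJ m rfl, sum_convAdd _ _ (fun _ => inferInstance),
        ← Finset.sum_add_distrib]
      refine Finset.sum_congr rfl fun p _ => ?_
      rw [convAdd_assoc, convAdd_comm _ μ, ← convAdd_assoc, step μ H hH, add_convAdd]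
    have h2 := firstEntry μ H hH (m + 1)
    rw [Nat.sum_antidiagonal_succ] at h2
    have h3 : ∀ p : ℕ × ℕ, convAdd (Rseq μ H (p.1 + 1)) (convPowAux μ p.2) =
        convAdd (Rseq μ H (p.1 + 1)) ((convPowAux μ p.2).restrict H) +
        convAdd (Rseq μ H (p.1 + 1)) ((convPowAux μ p.2).restrict Hᶜ) := fun p => by
      rw [← convAdd_add, Measure.restrict_add_restrict_compl hH]
    simp only [h3, Finset.sum_add_distrib, Rseq.eq_1, hz, zero_add] at h2
    rw [succ_nsmul, h1, Nat.sum_antidiagonal_succ, Nat.sum_antidiagonal_succ]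
    simp only [Rseq.eq_1, Qseq.eq_1, hz, zero_add, dirac_convAdd]
    have h4 : (convPowAux μ (m + 1)).restrict H + (convPowAux μ (m + 1)).restrict Hᶜ =
      convPowAux μ (m + 1) := Measure.restrict_add_restrict_compl hH
    generalize ∑ p ∈ antidiagonal m,
      convAdd (Qseq μ H (p.1 + 1)) ((convPowAux μ p.2).restrict Hᶜ) = A at *
    generalize ∑ p ∈ antidiagonal m,
      convAdd (Rseq μ H (p.1 + 1)) ((convPowAux μ p.2).restrict Hᶜ) = B at *
    generalize ∑ p ∈ antidiagonal m,
      convAdd (Rseq μ H (p.1 + 1)) ((convPowAux μ p.2).restrict H) = C at *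
    calc _ = A + (convAdd (Qseq μ H (m + 1)) μ + (C + B)) := by abel
      _ = A + ((convPowAux μ (m + 1)).restrict H + (convPowAux μ (m + 1)).restrict Hᶜ) := by
        rw [← h2, h4]
      _ = _ := by abel

lemma Qseq_supp (hH : MeasurableSet H) (h0 : (0 : (EuclideanSpace ℝ (Fin d))) ∉ H) (n : ℕ) : Qseq μ H n H = 0 := by
  cases n with
  | zero => rw [Qseq, Measure.dirac_apply' _ hH]; simp [h0]
  | succ n => rw [Qseq, Measure.restrict_apply hH]; simp

lemma Rseq_supp (hH : MeasurableSet H) (n : ℕ) : Rseq μ H n Hᶜ = 0 := by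
  cases n with
  | zero => simp [Rseq]
  | succ n => rw [Rseq, Measure.restrict_apply hH.compl]; simp

lemma bothIds (hH : MeasurableSet H) (h0 : (0 : (EuclideanSpace ℝ (Fin d))) ∉ H)
    (hHadd : ∀ a ∈ H, ∀ b ∈ H, a + b ∈ H)
    (hHcadd : ∀ a ∈ Hᶜ, ∀ b ∈ Hᶜ, a + b ∈ Hᶜ) (n : ℕ)
    (hK : (n + 1) • convAdd (Qseq μ H n) μ +
      ∑ p ∈ antidiagonal n, convAdd (Rseq μ H p.1) ((convPowAux μ p.2).restrict H) =
    ∑ p ∈ antidiagonal n, convAdd (Qseq μ H p.1) ((convPowAux μ p.2).restrict Hᶜ) +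
      (convPowAux μ n).restrict H) :
    (n + 1) • Qseq μ H (n + 1) =
      ∑ p ∈ antidiagonal n, convAdd (Qseq μ H p.1) ((convPowAux μ p.2).restrict Hᶜ) ∧
    (n + 1) • Rseq μ H (n + 1) +
      ∑ p ∈ antidiagonal n, convAdd (Rseq μ H p.1) ((convPowAux μ p.2).restrict H) =
      (convPowAux μ n).restrict H := by
  have hR : ∀ p : ℕ × ℕ,
      convAdd (Rseq μ H p.1) ((convPowAux μ p.2).restrict H) Hᶜ = 0 := fun p =>
    convAdd_supp hH hHadd _ _ (Rseq_supp μ H hH _)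
      (by rw [Measure.restrict_apply hH.compl]; simp)
  have hQ : ∀ p : ℕ × ℕ,
      convAdd (Qseq μ H p.1) ((convPowAux μ p.2).restrict Hᶜ) Hᶜᶜ = 0 := fun p =>
    convAdd_supp hH.compl hHcadd _ _ (by rw [compl_compl]; exact Qseq_supp μ H hH h0 _)
      (by rw [Measure.restrict_apply hH.compl.compl]; simp)
  have hR' : ∀ p : ℕ × ℕ,
      (convAdd (Rseq μ H p.1) ((convPowAux μ p.2).restrict H)).restrict Hᶜ = 0 := fun p =>
    Measure.restrict_eq_zero.2 (hR p)
  have hQ' : ∀ p : ℕ × ℕ,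
      (convAdd (Qseq μ H p.1) ((convPowAux μ p.2).restrict Hᶜ)).restrict H = 0 := fun p =>
    Measure.restrict_eq_zero.2 (by simpa using hQ p)
  constructor
  · have := congrArg (fun ν => Measure.restrict ν Hᶜ) hK
    simp only [Measure.restrict_add, restrict_sum', restrict_nsmul', hR',
      fun p => restrict_self_of_supp _ (hQ p), Finset.sum_const_zero, add_zero] at this
    rw [Qseq, this, Measure.restrict_restrict hH.compl]
    simp
  · have := congrArg (fun ν => Measure.restrict ν H) hK
    simp only [Measure.restrict_add, restrict_sum', restrict_nsmul', hQ',
      fun p => restrict_self_of_supp _ (hR p), Finset.sum_const_zero, zero_add] at this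
    rw [Rseq, this, Measure.restrict_restrict hH, Set.inter_self]

lemma mainRec (hH : MeasurableSet H) (h0 : (0 : (EuclideanSpace ℝ (Fin d))) ∉ H)
    (hHadd : ∀ a ∈ H, ∀ b ∈ H, a + b ∈ H)
    (hHcadd : ∀ a ∈ Hᶜ, ∀ b ∈ Hᶜ, a + b ∈ Hᶜ) (n : ℕ) :
    (n + 1) • Rseq μ H (n + 1) +
      ∑ p ∈ antidiagonal n, convAdd (Rseq μ H p.1) ((convPowAux μ p.2).restrict H) =
      (convPowAux μ n).restrict H := by
  have hJ : ∀ n, (n + 1) • Qseq μ H (n + 1) =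
      ∑ p ∈ antidiagonal n, convAdd (Qseq μ H p.1) ((convPowAux μ p.2).restrict Hᶜ) := by
    intro n
    induction n with
    | zero => exact (bothIds μ H hH h0 hHadd hHcadd 0 (keyStep μ H hH 0 (by simp))).1
    | succ n ih =>
      refine (bothIds μ H hH h0 hHadd hHcadd _ (keyStep μ H hH (n + 1) ?_)).1
      intro m hm
      obtain rfl : n = m := by omega
      exact ih
  exact (bothIds μ H hH h0 hHadd hHcadd n (keyStep μ H hH n (fun m _ => hJ m))).2

lemma mainRecReal (hH : MeasurableSet H) (h0 : (0 : (EuclideanSpace ℝ (Fin d))) ∉ H)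
    (hHadd : ∀ a ∈ H, ∀ b ∈ H, a + b ∈ H)
    (hHcadd : ∀ a ∈ Hᶜ, ∀ b ∈ Hᶜ, a + b ∈ Hᶜ) (n : ℕ) :
    (n + 1) * (Rseq μ H (n + 1) Set.univ).toReal +
      ∑ p ∈ antidiagonal n, (Rseq μ H p.1 Set.univ).toReal * (convPowAux μ p.2 H).toReal =
      (convPowAux μ n H).toReal := by
  have h := congrArg (fun ν => (ν Set.univ).toReal) (mainRec μ H hH h0 hHadd hHcadd n)
  simp only [Measure.add_apply, Measure.smul_apply, Measure.finsetSum_apply, convAdd_univ,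
    Measure.restrict_apply_univ] at h
  rw [ENNReal.toReal_add, ENNReal.toReal_sum] at h
  · have hn : ((n : ENNReal) + 1).toReal = (n : ℝ) + 1 := by
      rw [ENNReal.toReal_add (by simp) (by simp)]; simp
    simpa [ENNReal.toReal_mul, hn] using h
  · intro p _
    exact ENNReal.mul_ne_top (measure_ne_top _ _) (measure_ne_top _ _)
  · simpa using ENNReal.mul_ne_top (by simp) (measure_ne_top _ _)
  · refine ENNReal.sum_ne_top.2 fun p _ => ?_
    exact ENNReal.mul_ne_top (measure_ne_top _ _) (measure_ne_top _ _)

lemma Rseq_le (hH : MeasurableSet H) (n : ℕ) : (Rseq μ H n Set.univ).toReal ≤ 1 := by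
  have hQ : ∀ n, Qseq μ H n Set.univ ≤ 1 := by
    intro n
    induction n with
    | zero => simp [Qseq]
    | succ n ih =>
      rw [Qseq]
      refine (Measure.restrict_apply_le _ _).trans ?_
      rw [convAdd_univ]; simpa using ih
  refine ENNReal.toReal_le_of_le_ofReal zero_le_one ?_
  rw [ENNReal.ofReal_one]
  cases n with
  | zero => simp [Rseq]
  | succ n =>
    rw [Rseq]
    refine (Measure.restrict_apply_le _ _).trans ?_
    rw [convAdd_univ]; simpa using hQ n

lemma summable_pw (c : ℕ → ℝ) (hc : ∀ n, |c n| ≤ 1) (s : ℝ) (hs : |s| < 1) :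
    Summable fun n => ‖c n * s ^ n‖ := by
  refine Summable.of_nonneg_of_le (fun _ => norm_nonneg _) (fun n => ?_)
    (summable_geometric_of_lt_one (abs_nonneg s) hs)
  rw [norm_mul, norm_pow, Real.norm_eq_abs, Real.norm_eq_abs]
  exact mul_le_of_le_one_left (by positivity) (hc n)

lemma deriv_pw (c : ℕ → ℝ) (hc : ∀ n, |c n| ≤ 1) (s : ℝ) (hs : |s| < 1) :
    HasDerivAt (fun z => ∑' n, c n * z ^ n) (∑' n : ℕ, (n + 1) * c (n + 1) * s ^ n) s := by
  obtain ⟨r, hr1, hr2⟩ := exists_between hs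
  have hr0 : 0 < r := (abs_nonneg s).trans_lt hr1
  have hu : Summable fun n : ℕ => (n : ℝ) * r ^ (n - 1) := by
    rw [← summable_nat_add_iff 1]
    have h1 := summable_pow_mul_geometric_of_norm_lt_one (R := ℝ) 1 (r := r)
      (by rwa [Real.norm_eq_abs, abs_of_pos hr0])
    have h2 := summable_geometric_of_lt_one hr0.le hr2
    refine (h1.add h2).congr fun n => ?_
    simp; ring
  have hb : ∀ (n : ℕ) (y : ℝ), y ∈ Metric.ball (0 : ℝ) r →
      ‖c n * (n * y ^ (n - 1))‖ ≤ n * r ^ (n - 1) := by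
    intro n y hy
    rw [mem_ball_zero_iff, Real.norm_eq_abs] at hy
    rw [norm_mul, norm_mul, norm_pow, Real.norm_eq_abs, Real.norm_eq_abs, Real.norm_eq_abs,
      Nat.abs_cast]
    refine (mul_le_of_le_one_left (by positivity) (hc n)).trans ?_
    gcongr
  have hsb : s ∈ Metric.ball (0 : ℝ) r := by simpa using hr1
  have key := hasDerivAt_tsum_of_isPreconnected (g := fun n z => c n * z ^ n)
    (g' := fun n y => c n * (n * y ^ (n - 1))) hu Metric.isOpen_ball
    (convex_ball (0 : ℝ) r).isPreconnected
    (fun n y _ => (hasDerivAt_pow n y).const_mul (c n)) hb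
    (Metric.mem_ball_self hr0) (summable_pw c hc 0 (by simp)).of_norm hsb
  refine key.congr_deriv ?_
  have hsum : Summable fun n : ℕ => c n * (n * s ^ (n - 1)) :=
    Summable.of_norm_bounded hu fun n => hb n s hsb
  rw [hsum.tsum_eq_zero_add]
  simp only [Nat.cast_zero, zero_mul, mul_zero, zero_add, Nat.cast_add, Nat.cast_one,
    Nat.add_sub_cancel]
  exact tsum_congr fun n => by ring

/-- Real-analytic part: the recursion integrates to the exponential formula. -/
lemma analytic (φ α : ℕ → ℝ) (hφ : ∀ n, |φ n| ≤ 1) (hα : ∀ n, |α n| ≤ 1) (hφ0 : φ 0 = 1)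
    (hrec : ∀ n : ℕ, (n + 1) * φ (n + 1) = - ∑ p ∈ antidiagonal n, φ p.1 * α p.2)
    (q : ℝ) (hq : |q| < 1) :
    ∑' n, φ n * q ^ n = Real.exp (-∑' n : ℕ, q ^ (n + 1) / (n + 1) * α n) := by
  let c : ℕ → ℝ := fun n => α (n - 1) / n
  have hc : ∀ n, |c n| ≤ 1 := by
    intro n
    rcases n with _ | n
    · simp [c]
    · simp only [c, Nat.add_sub_cancel]
      rw [abs_div, Nat.abs_cast]
      refine div_le_one_of_le₀ ((hα n).trans ?_) (by positivity)
      push_cast; linarith [n.cast_nonneg (α := ℝ)]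
  have hc0 : c 0 = 0 := by simp [c]
  have hcs : ∀ n : ℕ, ((n : ℝ) + 1) * c (n + 1) = α n := by
    intro n
    simp only [c, Nat.add_sub_cancel]
    push_cast
    field_simp
  have hd : ∀ s : ℝ, |s| < 1 → HasDerivAt
      (fun z => (∑' n, φ n * z ^ n) * Real.exp (∑' n, c n * z ^ n)) 0 s := by
    intro s hs
    have h1 := deriv_pw φ hφ s hs
    have h2 := deriv_pw c hc s hs
    simp only [hcs] at h2
    refine (h1.mul h2.exp).congr_deriv ?_
    have h3 : (∑' n : ℕ, ((n : ℝ) + 1) * φ (n + 1) * s ^ n) =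
        -((∑' n, φ n * s ^ n) * ∑' n, α n * s ^ n) := by
      rw [tsum_mul_tsum_eq_tsum_sum_antidiagonal_of_summable_norm (summable_pw φ hφ s hs)
        (summable_pw α hα s hs), ← tsum_neg]
      refine tsum_congr fun n => ?_
      rw [hrec, neg_mul, Finset.sum_mul]
      congr 1
      refine Finset.sum_congr rfl fun p hp => ?_
      rw [← mem_antidiagonal.1 hp, pow_add]; ring
    rw [h3]; ring
  have hconst : (∑' n, φ n * q ^ n) * Real.exp (∑' n, c n * q ^ n) =
      (∑' n, φ n * (0 : ℝ) ^ n) * Real.exp (∑' n, c n * (0 : ℝ) ^ n) := by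
    have hb : ∀ x ∈ Metric.ball (0 : ℝ) 1, |x| < 1 := fun x hx => by simpa using hx
    refine (convex_ball (0 : ℝ) 1).is_const_of_fderivWithin_eq_zero (𝕜 := ℝ)
      (f := fun z => (∑' n, φ n * z ^ n) * Real.exp (∑' n, c n * z ^ n))
      (fun x hx => (hd x (hb x hx)).differentiableAt.differentiableWithinAt)
      (fun x hx => ?_) (by simpa using hq) (by simp)
    rw [fderivWithin_of_isOpen Metric.isOpen_ball hx]
    have := (hd x (hb x hx)).hasFDerivAt.fderiv
    rw [this]; ext; simp
  have hz : ∀ f : ℕ → ℝ, ∑' n, f n * (0 : ℝ) ^ n = f 0 := by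
    intro f
    rw [tsum_eq_single 0 (fun n hn => by simp [hn])]; simp
  rw [hz, hz, hφ0, hc0, Real.exp_zero, mul_one] at hconst
  have hg : ∑' n, c n * q ^ n = ∑' n : ℕ, q ^ (n + 1) / (n + 1) * α n := by
    rw [(summable_pw c hc q hq).of_norm.tsum_eq_zero_add, hc0, zero_mul, zero_add]
    refine tsum_congr fun n => ?_
    rw [← hcs n]
    field_simp
  rw [Real.exp_neg, ← hg]
  exact eq_inv_of_mul_eq_one_left hconst

end Helpers

/-- Feller–Wiener–Hopf identity at frequency `ζ = 0`: if `H` and its complement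
are both closed under addition and `0 ∉ H`, then for every `q ∈ (0,1)`,
`1 − Σ_{n≥0} qⁿ R_n(ℝ^d) = exp(− Σ_{n≥1} (qⁿ/n) μ^{∗n}(H))`; both series
converge and the left-hand side is strictly positive. -/
theorem stmt_6 {d : ℕ} (μ : Measure (EuclideanSpace ℝ (Fin d)))
    [IsProbabilityMeasure μ] (H : Set (EuclideanSpace ℝ (Fin d)))
    (hH : MeasurableSet H) (h0 : (0 : EuclideanSpace ℝ (Fin d)) ∉ H)
    (hHadd : ∀ a ∈ H, ∀ b ∈ H, a + b ∈ H)
    (hHcadd : ∀ a ∈ Hᶜ, ∀ b ∈ Hᶜ, a + b ∈ Hᶜ)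
    (q : ℝ) (hq : q ∈ Set.Ioo (0 : ℝ) 1) :
    Summable (fun n : ℕ => q ^ n * ((Rseq μ H n) Set.univ).toReal) ∧
    Summable (fun n : ℕ => q ^ (n + 1) / (n + 1) * ((convPowAux μ n) H).toReal) ∧
    0 < 1 - ∑' n : ℕ, q ^ n * ((Rseq μ H n) Set.univ).toReal ∧
    1 - ∑' n : ℕ, q ^ n * ((Rseq μ H n) Set.univ).toReal =
      Real.exp (-∑' n : ℕ, q ^ (n + 1) / (n + 1) * ((convPowAux μ n) H).toReal) := by
  have hq' : |q| < 1 := abs_lt.2 ⟨by linarith [hq.1], hq.2⟩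
  have hr1 : ∀ n, |((Rseq μ H n) Set.univ).toReal| ≤ 1 := fun n => by
    rw [abs_of_nonneg ENNReal.toReal_nonneg]; exact Rseq_le μ H hH n
  have ha1 : ∀ n, |((convPowAux μ n) H).toReal| ≤ 1 := fun n => by
    rw [abs_of_nonneg ENNReal.toReal_nonneg]
    exact ENNReal.toReal_le_of_le_ofReal zero_le_one (by simpa using prob_le_one)
  have hr0 : ((Rseq μ H 0) Set.univ).toReal = 0 := by simp [Rseq]
  have hS1 : Summable (fun n : ℕ => q ^ n * ((Rseq μ H n) Set.univ).toReal) :=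
    (summable_pw _ hr1 q hq').of_norm.congr fun n => mul_comm _ _
  have hS2 : Summable (fun n : ℕ => q ^ (n + 1) / (n + 1) * ((convPowAux μ n) H).toReal) := by
    refine Summable.of_norm_bounded (summable_geometric_of_lt_one hq.1.le hq.2) fun n => ?_
    have hq0 := hq.1
    rw [norm_mul, Real.norm_eq_abs, Real.norm_eq_abs, abs_of_pos (by positivity)]
    refine (mul_le_of_le_one_right (by positivity) (ha1 n)).trans ?_
    refine (div_le_self (by positivity) (by linarith [n.cast_nonneg (α := ℝ)])).trans ?_
    exact pow_le_pow_of_le_one hq0.le hq.2.le (Nat.le_succ n)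
  let φ : ℕ → ℝ := fun n => if n = 0 then 1 else -((Rseq μ H n) Set.univ).toReal
  have hφ : ∀ n, φ n = (if n = 0 then 1 else 0) - ((Rseq μ H n) Set.univ).toReal := by
    intro n
    by_cases hn : n = 0
    · subst hn; simp [φ, hr0]
    · simp [φ, hn]
  have hmain := analytic φ (fun n => ((convPowAux μ n) H).toReal)
    (fun n => by
      by_cases hn : n = 0
      · simp [φ, hn]
      · simpa [φ, hn] using hr1 n) ha1 (by simp [φ])
    (fun n => by
      have h := mainRecReal μ H hH h0 hHadd hHcadd n
      have h2 : ∑ p ∈ Finset.HasAntidiagonal.antidiagonal n, (if p.1 = 0 then (1 : ℝ) else 0) *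
          ((convPowAux μ p.2) H).toReal = ((convPowAux μ n) H).toReal := by
        rw [Finset.sum_eq_single (0, n)]
        · simp
        · rintro ⟨a, b⟩ hab hne
          have : a ≠ 0 := by
            rintro rfl
            simp at hab
            exact hne (by simp [hab])
          simp [this]
        · simp
      simp only [hφ, sub_mul, Finset.sum_sub_distrib, h2]
      simp only [Nat.add_eq_zero_iff, one_ne_zero, and_false, if_false]
      linarith) q hq'
  have hL : ∑' n, φ n * q ^ n = 1 - ∑' n : ℕ, q ^ n * ((Rseq μ H n) Set.univ).toReal := by
    have h1 : HasSum (fun n : ℕ => (if n = 0 then (1 : ℝ) else 0)) 1 := hasSum_ite_eq 0 1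
    rw [← (h1.sub hS1.hasSum).tsum_eq]
    refine tsum_congr fun n => ?_
    rw [hφ]
    by_cases hn : n = 0
    · subst hn; simp
    · simp [hn]; ring
  rw [hL] at hmain
  exact ⟨hS1, hS2, hmain ▸ Real.exp_pos _, hmain⟩
end
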